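/- arXiv:1403.4111 — 2 statements merged into one kernel-verified Lean document; each statement's English description precedes it below -/
import Mathlib

section
/- Assume k² := ∫₀^∞ 1/w(x) dx < ∞. Then H_w is stable under pointwise multiplication and ‖fg‖_w ≤ √(5+4k²) ‖f‖_w ‖g‖_w for all f,g ∈ H_w. Consequently, (H_w, √(5+4k²)·‖·‖_w) is a Banach algebra under pointwise multiplication. -/
open MeasureTheory Set Filter

noncomputable section

/-- Inner product on the Filipović space `H_w`, for functions `g, h` with chosen
(weak) derivatives `g', h'`:  `⟨g,h⟩_w = g(0)h(0) + ∫₀^∞ w g' h'`. -/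
def wInner (w g g' h h' : ℝ → ℝ) : ℝ :=
  g 0 * h 0 + ∫ x in Ioi (0:ℝ), w x * g' x * h' x

/-- Norm on the Filipović space `H_w`. -/
def wNorm (w g g' : ℝ → ℝ) : ℝ := Real.sqrt (wInner w g g' g g')

/-- `w : ℝ≥0 → [1,∞)` continuous, increasing, with `w 0 = 1`. -/
structure IsWeight (w : ℝ → ℝ) : Prop where
  cont : ContinuousOn w (Ici 0)
  mono : MonotoneOn w (Ici 0)
  one_le : ∀ x ∈ Ici (0:ℝ), 1 ≤ w x
  at_zero : w 0 = 1

/-- `g ∈ H_w` with derivative `g'`: `g` is absolutely continuous on `[0,∞)` with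
a.e. derivative `g'`, and `∫₀^∞ w (g')² < ∞`. -/
def MemHw (w g g' : ℝ → ℝ) : Prop :=
  (∀ x ∈ Ici (0:ℝ), g x = g 0 + ∫ t in Ioc (0:ℝ) x, g' t) ∧
  (∀ x ∈ Ici (0:ℝ), IntegrableOn g' (Ioc 0 x)) ∧
  IntegrableOn (fun x => w x * g' x ^ 2) (Ioi 0)

/-- The reproducing kernel `h_x(y) = 1 + ∫₀^{min(x,y)} 1/w(s) ds`. -/
def hker (w : ℝ → ℝ) (x y : ℝ) : ℝ := 1 + ∫ s in Ioc (0:ℝ) (min x y), 1 / w s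

/-- Derivative of `h_x`. -/
def hker' (w : ℝ → ℝ) (x : ℝ) : ℝ → ℝ := (Iic x).indicator (fun s => 1 / w s)

lemma aux_meas {h : ℝ → ℝ} (hh : ∀ x ∈ Ici (0:ℝ), IntegrableOn h (Ioc 0 x)) :
    AEStronglyMeasurable h (volume.restrict (Ioi (0:ℝ))) := by
  have e : Ioi (0:ℝ) = ⋃ n : ℕ, Ioc (0:ℝ) n := by
    ext x
    simp only [mem_Ioi, mem_iUnion, mem_Ioc]
    constructor
    · intro hx
      obtain ⟨n, hn⟩ := exists_nat_ge x
      exact ⟨n, hx, hn⟩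
    · rintro ⟨n, h1, _⟩
      exact h1
  rw [e, aestronglyMeasurable_iUnion_iff]
  intro n
  exact (hh n (by simp)).aestronglyMeasurable

lemma aux_mul {u u' v v' : ℝ → ℝ} {x : ℝ} (hx : 0 ≤ x)
    (hu : ∀ y ∈ Ici (0:ℝ), u y = u 0 + ∫ t in Ioc (0:ℝ) y, u' t)
    (hv : ∀ y ∈ Ici (0:ℝ), v y = v 0 + ∫ t in Ioc (0:ℝ) y, v' t)
    (hui : IntegrableOn u' (Ioc 0 x)) (hvi : IntegrableOn v' (Ioc 0 x)) :
    IntegrableOn (fun t => u' t * v t + u t * v' t) (Ioc 0 x) ∧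
    u x * v x = u 0 * v 0 + ∫ t in Ioc (0:ℝ) x, (u' t * v t + u t * v' t) := by
  have key : ∀ u u' : ℝ → ℝ, (∀ y ∈ Ici (0:ℝ), u y = u 0 + ∫ t in Ioc (0:ℝ) y, u' t) →
      IntegrableOn u' (Ioc 0 x) → ∃ U : ℝ → ℝ, AbsolutelyContinuousOnInterval U 0 x ∧
      (∀ y ∈ Icc 0 x, U y = u y) ∧ ∀ᵐ y, y ∈ uIcc 0 x → deriv U y = u' y := by
    intro u u' hu hui
    have hii : IntervalIntegrable u' volume 0 x :=
      (intervalIntegrable_iff_integrableOn_Ioc_of_le hx).2 hui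
    refine ⟨fun y => u 0 + ∫ t in (0:ℝ)..y, u' t, ?_, ?_, ?_⟩
    · have h1 := hii.absolutelyContinuousOnInterval_intervalIntegral (c := 0) (by simp)
      have h2 : AbsolutelyContinuousOnInterval (fun _ : ℝ => u 0) 0 x :=
        ((LipschitzWith.const (u 0)).lipschitzOnWith
          (s := uIcc 0 x)).absolutelyContinuousOnInterval
      exact h2.add h1
    · intro y hy
      rw [hu y hy.1]
      simp only
      rw [intervalIntegral.integral_of_le hy.1]
    · filter_upwards [hii.ae_hasDerivAt_integral] with y hy hy2
      exact ((hy hy2 0 (by simp)).const_add (u 0)).deriv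
  obtain ⟨U, hU, hUu, hUd⟩ := key u u' hu hui
  obtain ⟨V, hV, hVv, hVd⟩ := key v v' hv hvi
  have hEq := hU.integral_deriv_mul_eq_sub hV
  have hInt : IntervalIntegrable (fun t => deriv U t * V t + U t * deriv V t) volume 0 x :=
    (hU.intervalIntegrable_deriv.mul_continuousOn hV.continuousOn).add
      (hV.intervalIntegrable_deriv.continuousOn_mul hU.continuousOn)
  rw [intervalIntegrable_iff_integrableOn_Ioc_of_le hx] at hInt
  rw [intervalIntegral.integral_of_le hx] at hEq
  have hae : (fun t => deriv U t * V t + U t * deriv V t) =ᵐ[volume.restrict (Ioc 0 x)]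
      (fun t => u' t * v t + u t * v' t) := by
    rw [Filter.EventuallyEq, ae_restrict_iff' measurableSet_Ioc]
    filter_upwards [hUd, hVd] with t h1 h2 ht
    have ht' : t ∈ Icc 0 x := Ioc_subset_Icc_self ht
    rw [h1 (by rwa [uIcc_of_le hx]), h2 (by rwa [uIcc_of_le hx]), hUu t ht', hVv t ht']
  refine ⟨hInt.congr hae, ?_⟩
  rw [integral_congr_ae hae, hUu x ⟨hx, le_rfl⟩, hVv x ⟨hx, le_rfl⟩,
    hUu 0 ⟨le_rfl, hx⟩, hVv 0 ⟨le_rfl, hx⟩] at hEq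
  rw [hEq]; ring

lemma aux_sup {w f f' : ℝ → ℝ} (hw : IsWeight w)
    (hk : IntegrableOn (fun x => 1 / w x) (Ioi 0)) (hf : MemHw w f f') {x : ℝ} (hx : 0 ≤ x) :
    f x ^ 2 ≤ (1 + ∫ s in Ioi (0:ℝ), 1 / w s) *
      (f 0 ^ 2 + ∫ s in Ioi (0:ℝ), w s * f' s ^ 2) := by
  obtain ⟨h1, h2, h3⟩ := hf
  have hsub : Ioc (0:ℝ) x ⊆ Ioi 0 := Ioc_subset_Ioi_self
  have wpos : ∀ s ∈ Ioi (0:ℝ), 0 < w s := fun s hs =>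
    lt_of_lt_of_le one_pos (hw.one_le s (Ioi_subset_Ici_self hs))
  have hK : ∫ s in Ioc (0:ℝ) x, 1 / w s ≤ ∫ s in Ioi (0:ℝ), 1 / w s := by
    apply setIntegral_mono_set hk _ hsub.eventuallyLE
    filter_upwards [ae_restrict_mem measurableSet_Ioi] with s hs
    exact (one_div_pos.2 (wpos s hs)).le
  have hF : ∫ s in Ioc (0:ℝ) x, w s * f' s ^ 2 ≤ ∫ s in Ioi (0:ℝ), w s * f' s ^ 2 := by
    apply setIntegral_mono_set h3 _ hsub.eventuallyLE
    filter_upwards [ae_restrict_mem measurableSet_Ioi] with s hs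
    exact mul_nonneg (wpos s hs).le (sq_nonneg _)
  have quad : ∀ t : ℝ, 0 ≤ (∫ s in Ioi (0:ℝ), 1 / w s) * (t * t) +
      (2 * ∫ s in Ioc (0:ℝ) x, f' s) * t + ∫ s in Ioi (0:ℝ), w s * f' s ^ 2 := by
    intro t
    have i1 := (hk.mono_set hsub).mul_const (t * t)
    have i2 := (h2 x hx).const_mul (2 * t)
    have i3 := h3.mono_set hsub
    have : 0 ≤ ∫ s in Ioc (0:ℝ) x, (1 / w s * (t * t) + 2 * t * f' s + w s * f' s ^ 2) := by
      apply setIntegral_nonneg measurableSet_Ioc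
      intro s hs
      have hp := wpos s (hsub hs)
      have : 1 / w s * (t * t) + 2 * t * f' s + w s * f' s ^ 2 = (t + w s * f' s) ^ 2 / w s := by
        field_simp
        ring
      rw [this]
      positivity
    have i12 : Integrable (fun s => 1 / w s * (t * t) + 2 * t * f' s)
        (volume.restrict (Ioc 0 x)) := i1.add i2
    rw [integral_add i12 i3, integral_add i1 i2, integral_mul_const,
      integral_const_mul] at this
    nlinarith [mul_self_nonneg t]
  have hd := discrim_le_zero quad
  have hq := quad (- f 0)
  rw [discrim] at hd
  rw [h1 x hx]
  nlinarith

/-- if `k² = ∫₀^∞ 1/w < ∞` then `H_w` is stable under pointwise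
multiplication with `‖fg‖_w ≤ √(5+4k²) ‖f‖_w ‖g‖_w`; consequently the scaled
norm `√(5+4k²)‖·‖_w` is submultiplicative (Banach algebra property). -/
theorem stmt6 (w : ℝ → ℝ) (hw : IsWeight w)
    (hk : IntegrableOn (fun x => 1 / w x) (Ioi 0)) :
    ∀ f f' g g' : ℝ → ℝ, MemHw w f f' → MemHw w g g' →
      MemHw w (fun x => f x * g x) (fun x => f' x * g x + f x * g' x) ∧
      wNorm w (fun x => f x * g x) (fun x => f' x * g x + f x * g' x) ≤
        Real.sqrt (5 + 4 * ∫ s in Ioi (0:ℝ), 1 / w s) * wNorm w f f' * wNorm w g g' ∧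
      Real.sqrt (5 + 4 * ∫ s in Ioi (0:ℝ), 1 / w s) *
          wNorm w (fun x => f x * g x) (fun x => f' x * g x + f x * g' x) ≤
        (Real.sqrt (5 + 4 * ∫ s in Ioi (0:ℝ), 1 / w s) * wNorm w f f') *
          (Real.sqrt (5 + 4 * ∫ s in Ioi (0:ℝ), 1 / w s) * wNorm w g g') := by
  intro f f' g g' hf hg
  have wpos : ∀ s ∈ Ioi (0:ℝ), 0 < w s := fun s hs =>
    lt_of_lt_of_le one_pos (hw.one_le s (Ioi_subset_Ici_self hs))
  have hK0 : 0 ≤ ∫ s in Ioi (0:ℝ), 1 / w s :=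
    setIntegral_nonneg measurableSet_Ioi fun s hs => (one_div_pos.2 (wpos s hs)).le
  have hF0 : 0 ≤ ∫ s in Ioi (0:ℝ), w s * f' s ^ 2 :=
    setIntegral_nonneg measurableSet_Ioi fun s hs => mul_nonneg (wpos s hs).le (sq_nonneg _)
  have hG0 : 0 ≤ ∫ s in Ioi (0:ℝ), w s * g' s ^ 2 :=
    setIntegral_nonneg measurableSet_Ioi fun s hs => mul_nonneg (wpos s hs).le (sq_nonneg _)
  have hfs := fun {x : ℝ} (hx : 0 ≤ x) => aux_sup hw hk hf hx
  have hgs := fun {x : ℝ} (hx : 0 ≤ x) => aux_sup hw hk hg hx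
  have hpr := fun (x : ℝ) (hx : x ∈ Ici (0:ℝ)) =>
    aux_mul hx hf.1 hg.1 (hf.2.1 x hx) (hg.2.1 x hx)
  have nrm : ∀ u u' : ℝ → ℝ, wNorm w u u' =
      Real.sqrt (u 0 ^ 2 + ∫ s in Ioi (0:ℝ), w s * u' s ^ 2) := by
    intro u u'
    simp only [wNorm, wInner, pow_two, mul_assoc]
  have hf3 := hf.2.2
  have hg3 := hg.2.2
  set K := ∫ s in Ioi (0:ℝ), 1 / w s
  set F := ∫ s in Ioi (0:ℝ), w s * f' s ^ 2 with hFdef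
  set G := ∫ s in Ioi (0:ℝ), w s * g' s ^ 2 with hGdef
  set A := (1 + K) * (f 0 ^ 2 + F)
  set B := (1 + K) * (g 0 ^ 2 + G)
  have hbd : ∀ s ∈ Ioi (0:ℝ), w s * (f' s * g s + f s * g' s) ^ 2 ≤
      2 * B * (w s * f' s ^ 2) + 2 * A * (w s * g' s ^ 2) := by
    intro s hs
    have hp := wpos s hs
    have a1 := hfs (le_of_lt hs)
    have a2 := hgs (le_of_lt hs)
    have b1 : f s ^ 2 * (w s * g' s ^ 2) ≤ A * (w s * g' s ^ 2) :=
      mul_le_mul_of_nonneg_right a1 (by positivity)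
    have b2 : g s ^ 2 * (w s * f' s ^ 2) ≤ B * (w s * f' s ^ 2) :=
      mul_le_mul_of_nonneg_right a2 (by positivity)
    have b3 : 0 ≤ w s * (f' s * g s - f s * g' s) ^ 2 := by positivity
    nlinarith
  have hbi : IntegrableOn (fun s => 2 * B * (w s * f' s ^ 2) + 2 * A * (w s * g' s ^ 2))
      (Ioi 0) := (hf3.const_mul (2 * B)).add (hg3.const_mul (2 * A))
  have hPi : IntegrableOn (fun s => w s * (f' s * g s + f s * g' s) ^ 2) (Ioi 0) := by
    refine Integrable.mono' hbi ?_ ?_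
    · exact ((hw.cont.mono Ioi_subset_Ici_self).aestronglyMeasurable measurableSet_Ioi).mul
        ((aux_meas fun x hx => (hpr x hx).1).pow 2)
    · filter_upwards [ae_restrict_mem measurableSet_Ioi] with s hs
      have hp := wpos s hs
      rw [Real.norm_of_nonneg (by positivity)]
      exact hbd s hs
  have hP : ∫ s in Ioi (0:ℝ), w s * (f' s * g s + f s * g' s) ^ 2 ≤ 2 * B * F + 2 * A * G := by
    refine (setIntegral_mono_on hPi hbi measurableSet_Ioi hbd).trans (le_of_eq ?_)
    rw [integral_add (hf3.const_mul (2 * B)) (hg3.const_mul (2 * A)), integral_const_mul,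
      integral_const_mul]
  have main : wNorm w (fun x => f x * g x) (fun x => f' x * g x + f x * g' x) ≤
        Real.sqrt (5 + 4 * K) * wNorm w f f' * wNorm w g g' := by
    rw [nrm, nrm, nrm, ← Real.sqrt_mul (by positivity), ← Real.sqrt_mul (by positivity)]
    apply Real.sqrt_le_sqrt
    refine (add_le_add_right hP _).trans ?_
    rw [← hFdef, ← hGdef]
    have e : (5 + 4 * K) * (f 0 ^ 2 + F) * (g 0 ^ 2 + G) -
        ((f 0 * g 0) ^ 2 + (2 * B * F + 2 * A * G)) =
        (4 + 4 * K) * (f 0 ^ 2 * g 0 ^ 2) + (3 + 2 * K) * (f 0 ^ 2 * G + g 0 ^ 2 * F)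
          + F * G := by
      simp only [A, B]
      ring
    have : 0 ≤ (4 + 4 * K) * (f 0 ^ 2 * g 0 ^ 2) + (3 + 2 * K) * (f 0 ^ 2 * G + g 0 ^ 2 * F)
          + F * G := by positivity
    linarith
  refine ⟨⟨fun x hx => (hpr x hx).2, fun x hx => (hpr x hx).1, hPi⟩, main, ?_⟩
  refine (mul_le_mul_of_nonneg_left main (Real.sqrt_nonneg _)).trans (le_of_eq ?_)
  ring
end
end

section
/- Let λ, x₀ > 0 and for n ∈ ℤ define g_n : ℝ≥0 → ℂ, g_n(x) = (1/√x₀) e^{(2πin/x₀ − λ)x}. Let V be the closed subspace of L²(ℝ≥0, ℂ) generated by (g_n)_{n∈ℤ}. Then (g_n)_{n∈ℤ} is a Riesz basis of V, and the restriction map B : V → L²([0,x₀], ℂ), f ↦ f|_{[0,x₀]}, is an invertible bounded linear operator. -/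
open MeasureTheory Set
open scoped Real

theorem aux_restrict {μ ν : Measure ℝ} (s : Set ℝ) (h : ν = μ.restrict s) :
    ∃ R : Lp ℂ 2 μ →L[ℂ] Lp ℂ 2 ν, ∀ f, (R f : ℝ → ℂ) =ᵐ[ν] f := by
  subst h
  exact ⟨LpToLpRestrictCLM ℝ ℂ ℂ μ 2 s, fun f => LpToLpRestrictCLM_coeFn ℂ s f⟩

theorem aux_mul_s16 {μ : Measure ℝ} (h : ℝ → ℂ) (hm : MemLp h ⊤ μ) :
    ∃ M : Lp ℂ 2 μ →L[ℂ] Lp ℂ 2 μ, ∀ f, (M f : ℝ → ℂ) =ᵐ[μ] fun x => h x * f x := by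
  refine ⟨(ContinuousLinearMap.mul ℂ ℂ).holderL μ ⊤ 2 2 (hm.toLp h), fun f => ?_⟩
  filter_upwards [(ContinuousLinearMap.mul ℂ ℂ).coeFn_holder (r := 2) (hm.toLp h) f, hm.coeFn_toLp] with x hx hy
  rw [← hy]
  exact hx

theorem aux_norm_sq {μ : Measure ℝ} (f : Lp ℂ 2 μ) : ‖f‖ ^ 2 = ∫ x, ‖f x‖ ^ 2 ∂μ := by
  have h := norm_sq_eq_re_inner (𝕜 := ℂ) f
  rw [h, L2.inner_def]
  have : ∀ x, inner ℂ (f x) (f x) = ((‖f x‖ ^ 2 : ℝ) : ℂ) := fun x => by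
    rw [inner_self_eq_norm_sq_to_K]; simp
  simp_rw [this]
  rw [integral_complex_ofReal]; simp

theorem aux_integrable {μ : Measure ℝ} (f : Lp ℂ 2 μ) : Integrable (fun x => ‖f x‖ ^ 2) μ :=
  (memLp_two_iff_integrable_sq_norm (Lp.memLp f).1).1 (Lp.memLp f)

/-- shift operator -/
theorem aux_shift (x₀ : ℝ) (hx₀ : 0 < x₀) :
    ∃ (R : Lp ℂ 2 (volume.restrict (Ioi (0:ℝ))) →L[ℂ] Lp ℂ 2 (volume.restrict (Ioc (0:ℝ) x₀)))
      (S : Lp ℂ 2 (volume.restrict (Ioi (0:ℝ))) →L[ℂ] Lp ℂ 2 (volume.restrict (Ioi (0:ℝ)))),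
      (∀ f, (R f : ℝ → ℂ) =ᵐ[volume.restrict (Ioc (0:ℝ) x₀)] f) ∧
      (∀ f, (S f : ℝ → ℂ) =ᵐ[volume.restrict (Ioi (0:ℝ))] fun x => f (x + x₀)) ∧
      ∀ f, ‖f‖ ^ 2 = ‖R f‖ ^ 2 + ‖S f‖ ^ 2 := by
  obtain ⟨R, hR⟩ := aux_restrict (μ := volume.restrict (Ioi (0:ℝ)))
    (ν := volume.restrict (Ioc (0:ℝ) x₀)) (Ioc 0 x₀) (by
      rw [Measure.restrict_restrict measurableSet_Ioc, inter_eq_left.2 Ioc_subset_Ioi_self])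
  obtain ⟨R', hR'⟩ := aux_restrict (μ := volume.restrict (Ioi (0:ℝ)))
    (ν := volume.restrict (Ioi x₀)) (Ioi x₀) (by
      rw [Measure.restrict_restrict measurableSet_Ioi, inter_eq_left.2 (Ioi_subset_Ioi hx₀.le)])
  have hmp : MeasurePreserving (fun x : ℝ => x + x₀) (volume.restrict (Ioi 0))
      (volume.restrict (Ioi x₀)) := by
    have := (measurePreserving_add_right (volume : Measure ℝ) x₀).restrict_preimage
      (s := Ioi x₀) measurableSet_Ioi
    simpa using this
  let C := (Lp.compMeasurePreservingₗᵢ (E := ℂ) (p := 2) ℂ _ hmp)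
  refine ⟨R, C.toContinuousLinearMap.comp R', hR, fun f => ?_, fun f => ?_⟩
  · have h1 : (C (R' f) : ℝ → ℂ) =ᵐ[_] _ := Lp.coeFn_compMeasurePreserving (R' f) hmp
    have h2 := hmp.quasiMeasurePreserving.ae_eq_comp (hR' f)
    exact h1.trans h2
  · have : ‖(C.toContinuousLinearMap.comp R') f‖ = ‖R' f‖ := C.norm_map _
    rw [this, aux_norm_sq, aux_norm_sq (R f), aux_norm_sq (R' f)]
    have h1 : ∫ x in Ioc 0 x₀, ‖R f x‖ ^ 2 = ∫ x in Ioc 0 x₀, ‖f x‖ ^ 2 := by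
      apply integral_congr_ae
      filter_upwards [hR f] with x hx
      rw [hx]
    have h2 : ∫ x in Ioi x₀, ‖R' f x‖ ^ 2 = ∫ x in Ioi x₀, ‖f x‖ ^ 2 := by
      apply integral_congr_ae
      filter_upwards [hR' f] with x hx
      rw [hx]
    rw [h1, h2]
    have hi : IntegrableOn (fun x => ‖f x‖ ^ 2) (Ioi 0) volume := aux_integrable f
    rw [← setIntegral_union (Ioc_disjoint_Ioi le_rfl) measurableSet_Ioi
      (hi.mono_set Ioc_subset_Ioi_self) (hi.mono_set (Ioi_subset_Ioi hx₀.le)),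
      Ioc_union_Ioi_eq_Ioi hx₀.le]

theorem aux_basis (x₀ : ℝ) (hx₀ : 0 < x₀) :
    ∃ e : HilbertBasis ℤ ℂ (Lp ℂ 2 (volume.restrict (Ioc (0:ℝ) x₀))),
      ∀ n : ℤ, (e n : ℝ → ℂ) =ᵐ[volume.restrict (Ioc (0:ℝ) x₀)]
        fun x => (Real.sqrt x₀ : ℂ)⁻¹ *
          Complex.exp ((2 * (π : ℂ) * Complex.I * (n : ℂ) / (x₀ : ℂ)) * (x : ℂ)) := by
  have hx₀' : (x₀ : ℂ) ≠ 0 := by exact_mod_cast hx₀.ne'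
  have hs : (Real.sqrt x₀ : ℂ)⁻¹ * (Real.sqrt x₀ : ℂ)⁻¹ = (x₀ : ℂ)⁻¹ := by
    rw [← mul_inv, ← Complex.ofReal_mul, Real.mul_self_sqrt hx₀.le]
  have hmem : ∀ n : ℤ, MemLp (fun x : ℝ => (Real.sqrt x₀ : ℂ)⁻¹ *
          Complex.exp ((2 * (π : ℂ) * Complex.I * (n : ℂ) / (x₀ : ℂ)) * (x : ℂ))) 2
          (volume.restrict (Ioc (0:ℝ) x₀)) := fun n => by
    refine MemLp.of_bound (C := ‖(Real.sqrt x₀ : ℂ)⁻¹‖) (by fun_prop) (ae_of_all _ fun x => ?_)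
    rw [norm_mul, Complex.norm_exp]
    have : ((2 * (π : ℂ) * Complex.I * (n : ℂ) / (x₀ : ℂ)) * (x : ℂ)) =
      ((2 * π * n / x₀ * x : ℝ) : ℂ) * Complex.I := by push_cast; ring
    rw [this]; simp
  have hconj : ∀ (m : ℤ) (x : ℝ), (starRingEnd ℂ) ((Real.sqrt x₀ : ℂ)⁻¹ *
      Complex.exp ((2 * (π : ℂ) * Complex.I * (m : ℂ) / (x₀ : ℂ)) * (x : ℂ))) =
      (Real.sqrt x₀ : ℂ)⁻¹ *
      Complex.exp ((2 * (π : ℂ) * Complex.I * (-m : ℂ) / (x₀ : ℂ)) * (x : ℂ)) := fun m x => by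
    rw [map_mul, ← Complex.exp_conj]
    simp [map_ofNat]
  let v : ℤ → Lp ℂ 2 (volume.restrict (Ioc (0:ℝ) x₀)) := fun n => (hmem n).toLp _
  have hv : ∀ n, (v n : ℝ → ℂ) =ᵐ[_] _ := fun n => (hmem n).coeFn_toLp
  have hinner : ∀ m f, inner ℂ (v m) f = ∫ x in Ioc 0 x₀, (Real.sqrt x₀ : ℂ)⁻¹ *
      Complex.exp ((2 * (π : ℂ) * Complex.I * (-m : ℂ) / (x₀ : ℂ)) * (x : ℂ)) * f x := by
    intro m f
    rw [L2.inner_def]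
    apply integral_congr_ae
    filter_upwards [hv m] with x hx
    rw [hx, RCLike.inner_apply, hconj, mul_comm]
  have hon : Orthonormal ℂ v := by
    rw [orthonormal_iff_ite]
    intro m n
    rw [hinner]
    have : ∫ x in Ioc 0 x₀, (Real.sqrt x₀ : ℂ)⁻¹ *
      Complex.exp ((2 * (π : ℂ) * Complex.I * (-m : ℂ) / (x₀ : ℂ)) * (x : ℂ)) * v n x =
      ∫ x in Ioc 0 x₀, (x₀ : ℂ)⁻¹ *
        Complex.exp ((2 * (π : ℂ) * Complex.I * ((n - m : ℤ) : ℂ) / (x₀ : ℂ)) * (x : ℂ)) := by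
      apply integral_congr_ae
      filter_upwards [hv n] with x hx
      rw [hx, ← hs, mul_mul_mul_comm, ← Complex.exp_add]
      congr 2; push_cast; ring
    rw [this, ← intervalIntegral.integral_of_le hx₀.le, intervalIntegral.integral_const_mul]
    split_ifs with h
    · subst h; simp [hx₀']
    · have hnm : ((n - m : ℤ) : ℂ) ≠ 0 := by
        exact_mod_cast sub_ne_zero.2 (Ne.symm h)
      rw [integral_exp_mul_complex]
      · have : 2 * (π : ℂ) * Complex.I * ((n - m : ℤ) : ℂ) / (x₀ : ℂ) * (x₀ : ℂ)
          = ((n - m : ℤ) : ℂ) * (2 * π * Complex.I) := by field_simp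
        rw [this, Complex.exp_int_mul_two_pi_mul_I]; simp
      · have := Complex.two_pi_I_ne_zero
        exact div_ne_zero (mul_ne_zero this hnm) hx₀'
  have hbot : (Submodule.span ℂ (Set.range v))ᗮ = ⊥ := by
    rw [Submodule.eq_bot_iff]
    intro f hf
    have h0 : ∀ n, inner ℂ (v n) f = 0 := fun n =>
      (Submodule.mem_orthogonal _ _).1 hf _ (Submodule.subset_span ⟨n, rfl⟩)
    have hc : ∀ n, fourierCoeffOn hx₀ f n = 0 := by
      intro n
      rw [fourierCoeffOn_eq_integral, intervalIntegral.integral_of_le hx₀.le]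
      have h1 := h0 n
      rw [hinner] at h1
      simp_rw [mul_assoc ((Real.sqrt x₀ : ℂ)⁻¹)] at h1
      rw [integral_const_mul] at h1
      have h2 := (mul_eq_zero.1 h1).resolve_left (by
        simp [Real.sqrt_eq_zero', hx₀])
      rw [smul_eq_zero]; right
      rw [← h2]
      apply integral_congr_ae
      refine ae_of_all _ fun x => ?_
      simp only [fourier_coe_apply, smul_eq_mul]
      congr 2
      push_cast; simp; ring
    have hs := hasSum_sq_fourierCoeffOn hx₀ (Lp.memLp f)
    simp_rw [hc] at hs
    have hz : HasSum (fun _ : ℤ => ‖(0 : ℂ)‖ ^ 2) 0 := by simp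
    have := hs.unique hz
    rw [intervalIntegral.integral_of_le hx₀.le, ← aux_norm_sq f] at this
    simpa [hx₀.ne'] using this
  refine ⟨HilbertBasis.mkOfOrthogonalEqBot hon hbot, fun n => ?_⟩
  rw [HilbertBasis.coe_mkOfOrthogonalEqBot]
  exact hv n

theorem aux_mulEquiv (lam x₀ : ℝ) :
    ∃ M : Lp ℂ 2 (volume.restrict (Ioc (0:ℝ) x₀)) ≃L[ℂ] Lp ℂ 2 (volume.restrict (Ioc (0:ℝ) x₀)),
      ∀ f, (M f : ℝ → ℂ) =ᵐ[volume.restrict (Ioc (0:ℝ) x₀)]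
        fun x => Complex.exp (-(lam : ℂ) * x) * f x := by
  have hmem : ∀ l : ℝ, MemLp (fun x : ℝ => Complex.exp (-(l : ℂ) * x)) ⊤
      (volume.restrict (Ioc (0:ℝ) x₀)) := fun l => by
    refine memLp_top_of_bound (C := Real.exp (|l| * |x₀|)) (by fun_prop) ?_
    refine (ae_restrict_iff' measurableSet_Ioc).2 (ae_of_all _ fun x hx => ?_)
    rw [Complex.norm_exp]
    have : (-(l : ℂ) * x).re = -l * x := by simp
    rw [this]
    apply Real.exp_le_exp.2
    calc -l * x ≤ |-l * x| := le_abs_self _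
      _ = |l| * |x| := by rw [abs_mul, abs_neg]
      _ ≤ |l| * |x₀| := by
        gcongr
        exact hx.1.le
        exact hx.2
  obtain ⟨M, hM⟩ := aux_mul_s16 _ (hmem lam)
  obtain ⟨N, hN⟩ := aux_mul_s16 _ (hmem (-lam))
  refine ⟨ContinuousLinearEquiv.equivOfInverse M N (fun f => ?_) (fun f => ?_), hM⟩
  · apply Lp.ext
    filter_upwards [hN (M f), hM f] with x h1 h2
    rw [h1, h2, ← mul_assoc, ← Complex.exp_add]
    simp
  · apply Lp.ext
    filter_upwards [hM (N f), hN f] with x h1 h2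
    rw [h1, h2, ← mul_assoc, ← Complex.exp_add]
    simp

/-- Abstract form: if the restriction is a multiple of an isometry, everything follows. -/
theorem aux_abstract {H K : Type*} [NormedAddCommGroup H] [InnerProductSpace ℂ H] [CompleteSpace H]
    [NormedAddCommGroup K] [InnerProductSpace ℂ K] (G : ℤ → H)
    (R : H →L[ℂ] K) (c : ℝ) (hc : 0 < c)
    (hR : ∀ f ∈ (Submodule.span ℂ (Set.range G)).topologicalClosure, ‖R f‖ = c * ‖f‖)
    (e : HilbertBasis ℤ ℂ K) (M : K ≃L[ℂ] K) (hM : ∀ n, R (G n) = M (e n)) :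
    ∃ (b : HilbertBasis ℤ ℂ ((Submodule.span ℂ (Set.range G)).topologicalClosure))
      (T : ((Submodule.span ℂ (Set.range G)).topologicalClosure : Submodule ℂ _) ≃L[ℂ]
        ((Submodule.span ℂ (Set.range G)).topologicalClosure : Submodule ℂ _)),
      (∀ n : ℤ, ((T (b n) : (Submodule.span ℂ (Set.range G)).topologicalClosure) : H) = G n) ∧
      ∃ B : ((Submodule.span ℂ (Set.range G)).topologicalClosure : Submodule ℂ _) ≃L[ℂ] K,
        ∀ f : ((Submodule.span ℂ (Set.range G)).topologicalClosure : Submodule ℂ _),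
          B f = R f := by
  set V := (Submodule.span ℂ (Set.range G)).topologicalClosure with hV
  have : CompleteSpace V := (Submodule.isClosed_topologicalClosure _).completeSpace_coe
  have hc' : (c : ℂ) ≠ 0 := by exact_mod_cast hc.ne'
  have hGV : ∀ n, G n ∈ V := fun n =>
    Submodule.le_topologicalClosure _ (Submodule.subset_span ⟨n, rfl⟩)
  let J : V →ₗᵢ[ℂ] K :=
    { toLinearMap := ((c : ℂ)⁻¹) • (R.toLinearMap.comp V.subtype)
      norm_map' := fun f => by
        have := hR f f.2
        simp only [LinearMap.smul_apply, LinearMap.comp_apply, Submodule.subtype_apply,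
          ContinuousLinearMap.coe_coe, norm_smul, this]
        simp [abs_of_pos hc, hc.ne'] }
  have hJ : ∀ f : V, J f = (c : ℂ)⁻¹ • R f := fun f => rfl
  have hsurj : Function.Surjective J := by
    have hcl : IsClosed (Set.range J) := J.isometry.isClosedEmbedding.isClosed_range
    have hcl2 : IsClosed (M ⁻¹' (Set.range J)) := hcl.preimage M.continuous
    let W : Submodule ℂ K := (LinearMap.range J.toLinearMap).comap (M : K →ₗ[ℂ] K)
    have hW : Submodule.span ℂ (Set.range e) ≤ W := by
      rw [Submodule.span_le]
      rintro _ ⟨n, rfl⟩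
      refine ⟨(c : ℂ) • ⟨G n, hGV n⟩, ?_⟩
      change J _ = M (e n)
      rw [map_smul, hJ, smul_inv_smul₀ hc']
      exact hM n
    have hWcl : IsClosed (W : Set K) := hcl2
    have htop : (⊤ : Submodule ℂ K) ≤ W := by
      rw [← e.dense_span]
      exact Submodule.topologicalClosure_minimal _ hW hWcl
    intro y
    have : M.symm y ∈ W := htop trivial
    obtain ⟨f, hf⟩ := this
    refine ⟨f, hf.trans ?_⟩
    simp
  let Je : V ≃ₗᵢ[ℂ] K := LinearIsometryEquiv.ofSurjective J hsurj
  have hJe : ∀ f, Je f = J f := fun f => rfl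
  let B : V ≃L[ℂ] K := Je.toContinuousLinearEquiv.trans
    (ContinuousLinearEquiv.smulLeft (Units.mk0 (c : ℂ) hc'))
  have hB : ∀ f : V, B f = R f := fun f => by
    change (c : ℂ) • Je f = _
    rw [hJe, hJ, smul_inv_smul₀ hc']
  refine ⟨HilbertBasis.ofRepr (Je.trans e.repr),
    (Je.toContinuousLinearEquiv.trans M).trans B.symm, fun n => ?_, B, hB⟩
  have hb : (HilbertBasis.ofRepr (Je.trans e.repr)) n = Je.symm (e n) := by
    classical
    rw [← HilbertBasis.repr_symm_single, ← HilbertBasis.repr_symm_single]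
    rfl
  have : B.symm (M (e n)) = ⟨G n, hGV n⟩ := by
    rw [ContinuousLinearEquiv.symm_apply_eq, hB, hM]
  rw [hb]
  change ((B.symm (M (Je (Je.symm (e n)))) : V) : H) = G n
  rw [LinearIsometryEquiv.apply_symm_apply, this]

/-- with `g_n(x) = (1/√x₀) e^{(2πin/x₀ − λ)x}` (realized as
elements `G n` of `L²((0,∞), ℂ)`) and `V` the closed subspace generated by the
`g_n`, the family `(g_n)_{n∈ℤ}` is a Riesz basis of `V` (the image of an
orthonormal basis under an invertible bounded operator), and the restriction
map `B : V → L²((0,x₀], ℂ)` is an invertible bounded linear operator. -/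
theorem stmt16 (lam x₀ : ℝ) (hlam : 0 < lam) (hx₀ : 0 < x₀)
    (G : ℤ → Lp ℂ 2 (volume.restrict (Ioi (0:ℝ))))
    (hG : ∀ n : ℤ, (G n : ℝ → ℂ) =ᵐ[volume.restrict (Ioi (0:ℝ))]
      fun x => (Real.sqrt x₀ : ℂ)⁻¹ *
        Complex.exp ((2 * (π : ℂ) * Complex.I * (n : ℂ) / (x₀ : ℂ) - (lam : ℂ)) * (x : ℂ))) :
    ∃ (b : HilbertBasis ℤ ℂ ((Submodule.span ℂ (Set.range G)).topologicalClosure))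
      (T : ((Submodule.span ℂ (Set.range G)).topologicalClosure : Submodule ℂ _) ≃L[ℂ]
        ((Submodule.span ℂ (Set.range G)).topologicalClosure : Submodule ℂ _)),
      (∀ n : ℤ, ((T (b n) : (Submodule.span ℂ (Set.range G)).topologicalClosure) :
          Lp ℂ 2 (volume.restrict (Ioi (0:ℝ)))) = G n) ∧
      ∃ B : ((Submodule.span ℂ (Set.range G)).topologicalClosure : Submodule ℂ _) ≃L[ℂ]
          Lp ℂ 2 (volume.restrict (Ioc (0:ℝ) x₀)),
        ∀ f : ((Submodule.span ℂ (Set.range G)).topologicalClosure : Submodule ℂ _),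
          ((B f : Lp ℂ 2 (volume.restrict (Ioc (0:ℝ) x₀))) : ℝ → ℂ)
            =ᵐ[volume.restrict (Ioc (0:ℝ) x₀)]
          ((f : Lp ℂ 2 (volume.restrict (Ioi (0:ℝ)))) : ℝ → ℂ) := by
  obtain ⟨R, S, hR, hS, hRS⟩ := aux_shift x₀ hx₀
  obtain ⟨e, he⟩ := aux_basis x₀ hx₀
  obtain ⟨M, hM⟩ := aux_mulEquiv lam x₀
  have hx₀' : (x₀ : ℂ) ≠ 0 := by exact_mod_cast hx₀.ne'
  have hRG : ∀ n, R (G n) = M (e n) := by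
    intro n
    apply Lp.ext
    have hle : volume.restrict (Ioc (0:ℝ) x₀) ≤ volume.restrict (Ioi (0:ℝ)) :=
      Measure.restrict_mono Ioc_subset_Ioi_self le_rfl
    have hG' := ae_mono hle (hG n)
    filter_upwards [hR (G n), hM (e n), he n, hG'] with x h1 h2 h3 h4
    rw [h1, h2, h3, h4, mul_left_comm, ← Complex.exp_add]
    congr 2
    ring
  set q : ℝ := Real.exp (-lam * x₀) with hq
  have hq0 : 0 < q := Real.exp_pos _
  have hq1 : q < 1 := Real.exp_lt_one_iff.2 (by nlinarith)
  have hSG : ∀ n, S (G n) = (q : ℂ) • G n := by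
    intro n
    apply Lp.ext
    have hmp : Measure.QuasiMeasurePreserving (fun x : ℝ => x + x₀) (volume.restrict (Ioi 0))
        (volume.restrict (Ioi 0)) := by
      have h := ((measurePreserving_add_right (volume : Measure ℝ) x₀).restrict_preimage
        (s := Ioi x₀) measurableSet_Ioi).quasiMeasurePreserving
      have h' := h.mono_right (Measure.restrict_mono (Ioi_subset_Ioi hx₀.le) le_rfl).absolutelyContinuous
      simpa using h'
    have hG' := hmp.ae_eq_comp (hG n)
    filter_upwards [hS (G n), hG', hG n, Lp.coeFn_smul (q : ℂ) (G n)] with x h1 h2 h3 h4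
    simp only [Function.comp_apply] at h2
    rw [h1, h2, h4, Pi.smul_apply, h3, smul_eq_mul, mul_left_comm, hq, Complex.ofReal_exp,
      ← Complex.exp_add]
    congr 1
    rw [Complex.exp_eq_exp_iff_exists_int]
    refine ⟨n, ?_⟩
    push_cast
    field_simp
    ring
  have hSV : ∀ f ∈ (Submodule.span ℂ (Set.range G)).topologicalClosure, S f = (q : ℂ) • f := by
    let W : Submodule ℂ (Lp ℂ 2 (volume.restrict (Ioi (0:ℝ)))) :=
      LinearMap.eqLocus (S : _ →ₗ[ℂ] Lp ℂ 2 (volume.restrict (Ioi (0:ℝ)))) ((q : ℂ) • LinearMap.id)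
    have hW : IsClosed (W : Set (Lp ℂ 2 (volume.restrict (Ioi (0:ℝ))))) :=
      isClosed_eq S.continuous (continuous_const_smul (q : ℂ))
    have hle : Submodule.span ℂ (Set.range G) ≤ W := by
      rw [Submodule.span_le]
      rintro _ ⟨n, rfl⟩
      exact hSG n
    intro f hf
    exact Submodule.topologicalClosure_minimal _ hle hW hf
  have hpos : 0 < 1 - q ^ 2 := by nlinarith
  have hnorm : ∀ f ∈ (Submodule.span ℂ (Set.range G)).topologicalClosure,
      ‖R f‖ = Real.sqrt (1 - q ^ 2) * ‖f‖ := by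
    intro f hf
    have h := hRS f
    rw [hSV f hf, norm_smul, Complex.norm_real, Real.norm_of_nonneg hq0.le] at h
    rw [← Real.sqrt_sq (norm_nonneg (R f))]
    have h2 : ‖R f‖ ^ 2 = (1 - q ^ 2) * ‖f‖ ^ 2 := by nlinarith
    rw [h2, Real.sqrt_mul hpos.le, Real.sqrt_sq (norm_nonneg _)]
  obtain ⟨b, T, hT, B, hB⟩ := aux_abstract G R _ (Real.sqrt_pos.2 hpos) hnorm e M hRG
  refine ⟨b, T, hT, B, fun f => ?_⟩
  rw [hB f]
  exact hR f
end
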